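/- arXiv:0806.4064 — 5 statements merged into one kernel-verified Lean document; each statement's English description precedes it below -/
import Mathlib

section
/- Let p be a prime and let A₁ = ∏_{i∈I} ℤ/pℤ and A₂ = ∏_{j∈J} ℤ/pℤ be Cartesian powers of the cyclic group of order p, each equipped with the product topology (so each is a compact abelian group). Suppose there is an isomorphism of topological groups ψ : A₁ × Â₁ → A₂ × Â₂ which intertwines the standard bicharacters, i.e., e₂(ψ(u), ψ(v)) = e₁(u,v) for all u, v ∈ A₁ × Â₁, where eᵢ((x,χ),(x',χ')) = χ'(x)·χ(x')⁻¹. Then A₁ and A₂ are isomorphic as topological groups (equivalently, the index sets I and J have the same cardinality). -/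
/-!
The dual of `A = ∏_I ℤ/p` is the discrete group `I →₀ ℤ/p`: a character of `A` is trivial on a
neighbourhood of the identity, because the circle has no small subgroups, hence depends on finitely
many coordinates only (`dualOfFinsupp_bijective`).

If `I` and `J` are finite, comparing the orders `p ^ (2|I|)` and `p ^ (2|J|)` of the two phase
spaces gives `|I| = |J|`. In the infinite case, a topological isomorphism from the phase space of
`I` onto that of `J`, followed by the projection to the discrete group `Â₂`, is a continuous
surjection onto `Â₂` and has finite image on the compact group `A₁`. So `Â₂` is covered by finitely
many translates of the image of `Â₁`, and since `|Â₂| = |J|` for infinite `J`, this forces `I` to be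
infinite with `|J| ≤ |I|` (`mk_index_le`). The roles of `I` and `J` are symmetric.
-/

/-- The standard bicharacter on `A × Â`: `e ((x,χ),(x',χ')) = χ' x * (χ x')⁻¹`. -/
noncomputable def stdBichar (A : Type*) [CommGroup A] [TopologicalSpace A] :
    (A × PontryaginDual A) → (A × PontryaginDual A) → Circle :=
  fun k l => l.2 k.1 * (k.2 l.1)⁻¹

/-- The compact group `∏_I ℤ/p`, written multiplicatively. -/
abbrev PowGroup (p : ℕ) (I : Type) : Type := Multiplicative (∀ _ : I, ZMod p)

instance (p : ℕ) [NeZero p] (I : Type) : CompactSpace (PowGroup p I) :=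
  inferInstanceAs (CompactSpace (∀ _ : I, ZMod p))

/-- The character `x ↦ exp (2πi/p · ∑ i, f i * x i)` attached to a finitely supported `f`. -/
noncomputable def dualOfFinsupp (p : ℕ) [NeZero p] (I : Type) (f : I →₀ ZMod p) :
    PontryaginDual (PowGroup p I) :=
  ({ toFun := fun x => ZMod.toCircle (f.sum fun i a => a * x.toAdd i)
     map_one' := by simp
     map_mul' := fun x y => by
       rw [← AddChar.map_add_eq_mul, ← Finsupp.sum_add]
       simp [mul_add]
     continuous_toFun := by
       refine continuous_of_discreteTopology.comp ?_
       refine continuous_finsetSum _ fun i _ => continuous_const.mul ?_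
       exact (continuous_apply i).comp continuous_toAdd } : PowGroup p I →ₜ* Circle)

theorem dualOfFinsupp_apply (p : ℕ) [NeZero p] (I : Type) (f : I →₀ ZMod p) (x : PowGroup p I) :
    dualOfFinsupp p I f x = ZMod.toCircle (f.sum fun i a => a * x.toAdd i) := rfl

theorem exists_toCircle_eq (p : ℕ) [NeZero p] (z : Circle) (hz : z ^ p = 1) :
    ∃ k : ZMod p, ZMod.toCircle k = z := by
  have hz' : (z : ℂ) ^ p = 1 := by rw [← Circle.coe_pow, hz, Circle.coe_one]
  obtain ⟨i, -, hi⟩ :=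
    (Complex.isPrimitiveRoot_exp p (NeZero.ne p)).eq_pow_of_pow_eq_one hz'
  refine ⟨(i : ZMod p), ?_⟩
  ext
  rw [ZMod.toCircle_natCast, ← hi, ← Complex.exp_nat_mul]
  congr 1
  ring

/-- A character of `∏_I ℤ/p` depends on finitely many coordinates only, as the circle has no small
subgroups. -/
theorem exists_finset_forall_eq_one (p : ℕ) [NeZero p] (I : Type)
    (χ : PontryaginDual (PowGroup p I)) :
    ∃ F : Finset I, ∀ x : I → ZMod p, (∀ i ∈ F, x i = 0) → χ (Multiplicative.ofAdd x) = 1 := by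
  have hc : Continuous fun x : I → ZMod p => χ (Multiplicative.ofAdd x) :=
    (map_continuous χ).comp continuous_ofAdd
  have hopen := (Circle.isOpen_centeredArc (Real.pi / 2)).preimage hc
  have h0 : (0 : I → ZMod p) ∈
      (fun x : I → ZMod p => χ (Multiplicative.ofAdd x)) ⁻¹' Circle.centeredArc (Real.pi / 2) := by
    rw [Set.mem_preimage, ofAdd_zero, map_one,
      Circle.mem_centeredArc (by linarith [Real.pi_pos])]
    simp [Real.pi_pos]
  obtain ⟨F, u, hu, hF⟩ := isOpen_pi_iff.1 hopen 0 h0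
  refine ⟨F, fun x hx => Circle.eq_one_of_forall_pow_mem_centeredArc_pi_div_two fun n _ => ?_⟩
  rw [← map_pow, ← ofAdd_nsmul]
  refine hF fun i hi => ?_
  have := (hu i hi).2
  simpa [hx i hi] using this

theorem dualOfFinsupp_bijective (p : ℕ) [NeZero p] (I : Type) :
    Function.Bijective (dualOfFinsupp p I) := by
  classical
  have hsingle : ∀ (f : I →₀ ZMod p) (i : I) (a : ZMod p),
      dualOfFinsupp p I f (Multiplicative.ofAdd (Pi.single i a)) = ZMod.toCircle (f i * a) := by
    intro f i a
    rw [dualOfFinsupp_apply]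
    congr 1
    rw [toAdd_ofAdd, Finsupp.sum, Finset.sum_eq_single i]
    · simp
    · intro j _ hj
      simp [hj]
    · intro hi
      simp [Finsupp.notMem_support_iff.1 hi]
  refine ⟨fun f g hfg => ?_, fun χ => ?_⟩
  · ext i
    have h := hsingle f i 1
    rw [hfg, hsingle g i 1] at h
    simpa using (ZMod.injective_toCircle h).symm
  · obtain ⟨F, hF⟩ := exists_finset_forall_eq_one p I χ
    have hroot : ∀ i, ∃ k : ZMod p,
        ZMod.toCircle k = χ (Multiplicative.ofAdd (Pi.single i 1)) := fun i =>
      exists_toCircle_eq p _ (by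
        rw [← map_pow, ← ofAdd_nsmul, ← Pi.single_smul]
        simp)
    choose k hk using hroot
    have hkF : ∀ i, k i ≠ 0 → i ∈ F := by
      intro i hi
      by_contra hiF
      apply hi
      apply ZMod.injective_toCircle
      rw [hk i, AddChar.map_zero_eq_one]
      refine hF _ fun j hj => Pi.single_eq_of_ne ?_ _
      rintro rfl
      exact hiF hj
    have hsk : ∀ i (a : ZMod p),
        χ (Multiplicative.ofAdd (Pi.single i a)) = ZMod.toCircle (k i * a) := by
      intro i a
      obtain ⟨n, rfl⟩ := ZMod.natCast_zmod_surjective a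
      have : (Pi.single i (n : ZMod p) : I → ZMod p) = n • Pi.single i 1 := by
        rw [← Pi.single_smul]; simp
      rw [this, ofAdd_nsmul, map_pow, ← hk, ← AddChar.map_nsmul_eq_pow, nsmul_eq_mul, mul_comm]
    refine ⟨Finsupp.onFinset F k hkF, ?_⟩
    ext1 x
    -- Split `x` into its coordinates in `F` and a part killed by `χ`.
    obtain ⟨y, rfl⟩ := Multiplicative.ofAdd.surjective x
    have hy : y = (∑ i ∈ F, Pi.single i (y i)) + (y - ∑ i ∈ F, Pi.single i (y i)) := by abel
    have hχ : χ (Multiplicative.ofAdd y) = ∏ i ∈ F, ZMod.toCircle (k i * y i) := by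
      rw [hy, ofAdd_add, map_mul, hF (y - ∑ i ∈ F, Pi.single i (y i)), mul_one, ofAdd_sum,
        map_prod]
      · rw [← hy]
        exact Finset.prod_congr rfl fun i _ => hsk i _
      · intro i hi
        simp [Finset.sum_apply, Finset.sum_pi_single, hi]
    rw [hχ, dualOfFinsupp_apply, Finsupp.onFinset_sum _ fun i => zero_mul _]
    exact map_prod ZMod.toCircle.toMonoidHom (fun i => Multiplicative.ofAdd (k i * y i)) F

theorem card_phaseSpace (p : ℕ) [NeZero p] (I : Type) [Finite I] :
    Nat.card (PowGroup p I × PontryaginDual (PowGroup p I)) = p ^ (2 * Nat.card I) := by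
  have := Fintype.ofFinite I
  rw [Nat.card_prod, ← Nat.card_congr (Equiv.ofBijective _ (dualOfFinsupp_bijective p I)),
    Nat.card_congr (Finsupp.equivFunOnFinite (α := I) (M := ZMod p)),
    Nat.card_congr (Multiplicative.toAdd (α := I → ZMod p)), Nat.card_fun, Nat.card_zmod]
  ring

theorem mk_dual_of_infinite (p : ℕ) [Fact p.Prime] (I : Type) [Infinite I] :
    Cardinal.mk (PontryaginDual (PowGroup p I)) = Cardinal.mk I := by
  rw [← Cardinal.mk_congr (Equiv.ofBijective _ (dualOfFinsupp_bijective p I)),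
    Cardinal.mk_finsupp_of_infinite, max_eq_left]
  exact (Cardinal.lt_aleph0_of_finite _).le.trans (Cardinal.aleph0_le_mk I)

open scoped Cardinal in
/-- `Â₂` is covered by finitely many translates of the image of `Â₁`: the image of the compact
group `A₁` in the discrete group `Â₂` is finite. -/
theorem mk_index_le {p : ℕ} [Fact p.Prime] {I J : Type} [Infinite J]
    (ψ : (PowGroup p I × PontryaginDual (PowGroup p I)) ≃*
      (PowGroup p J × PontryaginDual (PowGroup p J))) (hψ : Continuous ψ) :
    Infinite I ∧ #J ≤ #I := by
  let R : Set (PontryaginDual (PowGroup p J)) := Set.range fun a : PowGroup p I => (ψ (a, 1)).2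
  have hR : R.Finite := by
    refine (isCompact_range ?_).finite_of_discrete
    exact continuous_snd.comp (hψ.comp (by fun_prop))
  have := hR.to_subtype
  have hsurj : Function.Surjective
      fun q : R × PontryaginDual (PowGroup p I) => (q.1 : PontryaginDual _) * (ψ (1, q.2)).2 := by
    intro d
    obtain ⟨⟨a, χ⟩, h⟩ := ψ.surjective (1, d)
    refine ⟨(⟨_, a, rfl⟩, χ), ?_⟩
    change (ψ (a, 1)).2 * (ψ (1, χ)).2 = d
    rw [← Prod.snd_mul, ← map_mul, Prod.mk_mul_mk, mul_one, one_mul, h]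
  have hle := Cardinal.mk_le_of_surjective hsurj
  rw [mk_dual_of_infinite, Cardinal.mk_prod, Cardinal.lift_id, Cardinal.lift_id] at hle
  have hRlt : #R < ℵ₀ := Cardinal.lt_aleph0_of_finite _
  have hI : Infinite I := by
    by_contra hI
    have := not_infinite_iff_finite.1 hI
    have : Finite (I →₀ ZMod p) := Finite.of_equiv _ Finsupp.equivFunOnFinite.symm
    have : Finite (PontryaginDual (PowGroup p I)) :=
      Finite.of_surjective _ (dualOfFinsupp_bijective p I).2
    exact absurd ((Cardinal.aleph0_le_mk J).trans hle)
      (Cardinal.mul_lt_aleph0 hRlt (Cardinal.lt_aleph0_of_finite _)).not_ge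
  refine ⟨hI, hle.trans ?_⟩
  rw [mk_dual_of_infinite]
  exact Cardinal.mul_le_of_le (Cardinal.aleph0_le_mk I)
    (hRlt.le.trans (Cardinal.aleph0_le_mk I)) le_rfl

/-- Uniqueness of the "position space" in Theorem C: if two Cartesian powers
`∏_{i ∈ I} ℤ/pℤ` and `∏_{j ∈ J} ℤ/pℤ` (compact groups with the product topology) have
isomorphic phase spaces, compatibly with the standard bicharacters, then they are
isomorphic as topological groups; equivalently `I` and `J` have the same cardinality. -/
theorem exponent_p_position_space_unique
    (p : ℕ) (hp : p.Prime) (I J : Type)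
    (ψ : (Multiplicative (∀ _ : I, ZMod p) × PontryaginDual (Multiplicative (∀ _ : I, ZMod p)))
      ≃* (Multiplicative (∀ _ : J, ZMod p) × PontryaginDual (Multiplicative (∀ _ : J, ZMod p))))
    (hψ : Continuous ψ) (hψ' : Continuous ψ.symm)
    (hint : ∀ u v,
      stdBichar (Multiplicative (∀ _ : J, ZMod p)) (ψ u) (ψ v)
        = stdBichar (Multiplicative (∀ _ : I, ZMod p)) u v) :
    (∃ φ : (∀ _ : I, ZMod p) ≃+ (∀ _ : J, ZMod p), Continuous φ ∧ Continuous φ.symm) ∧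
    Nonempty (I ≃ J) := by
  have : Fact p.Prime := ⟨hp⟩
  have key : Nonempty (I ≃ J) := by
    rcases finite_or_infinite I with hI | hI
    · rcases finite_or_infinite J with hJ | hJ
      · -- Both phase spaces are finite, of orders `p ^ (2 * |I|)` and `p ^ (2 * |J|)`.
        have h := Nat.card_congr ψ.toEquiv
        rw [card_phaseSpace, card_phaseSpace] at h
        have h' := Nat.pow_right_injective hp.two_le h
        exact (Finite.card_eq (α := I) (β := J)).1 (by omega)
      · have := (mk_index_le ψ hψ).1
        exact (not_finite I).elim
    · obtain ⟨hJ, h1⟩ := mk_index_le ψ.symm hψ'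
      exact Cardinal.eq.1 (le_antisymm h1 (mk_index_le ψ hψ).2)
  obtain ⟨e⟩ := key
  refine ⟨⟨{ Equiv.arrowCongr e (Equiv.refl (ZMod p)) with map_add' := fun _ _ => rfl }, ?_, ?_⟩,
    ⟨e⟩⟩
  · exact continuous_pi fun j => continuous_apply (e.symm j)
  · exact continuous_pi fun i => continuous_apply (e i)
end

section
/- Let K be a finite abelian group and let e : K × K → U(1) be a nondegenerate alternating bicharacter (here K is discrete, so e♭ is required to be a group isomorphism of K onto Hom(K, U(1))). Then there exists a finite abelian group A and a group isomorphism φ : A × Â → K such that e(φ(x,χ), φ(x',χ')) = χ'(x)·χ(x')⁻¹ for all x, x' ∈ A and all χ, χ' ∈ Â, where Â = Hom(A, U(1)). -/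
/-!
The proof finds two isotropic subgroups `A`, `B` of `K` with `A ⊔ B = ⊤` (a Lagrangian splitting).
Nondegeneracy then forces `A ⊓ B = ⊥`, so `A × B ≃ K`, and `b ↦ e(·, b)` restricted to `A` is an
isomorphism of `B` onto `Hom(A, U(1))`: it is injective because `B` is isotropic, and surjective
because a character of `A`, extended by the projection `K → A`, is of the form `e(·, k)`.

The splitting (`exists_lagrangian_splitting`) is built by induction on `|K|`. If `x` has order
`n = exponent K`, then the character `e(x, ·)` has order `n`, and since the exponent of its image
is attained there is `y` with `ζ = e(x, y)` of order `n` (`exists_orderOf_pairing`). All values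
of `e` are `n`-th roots of unity, hence powers of `ζ`, so every `k` can be corrected by powers of
`x` and `y` to lie in the orthogonal complement `L` of `{x, y}`. The form is nondegenerate on `L`,
and adjoining `x` and `y` to the two halves of a splitting of `L` gives one of `K`.
-/

/-- An alternating bicharacter on an abelian group `K` (no topology): a map `K × K → U(1)`
which is a homomorphism in each variable separately and satisfies `e k k = 1`. -/
def IsAltBicharacter {K : Type*} [CommGroup K] (e : K → K → Circle) : Prop :=
  (∀ k l l' : K, e k (l * l') = e k l * e k l') ∧
  (∀ k k' l : K, e (k * k') l = e k l * e k' l) ∧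
  ∀ k : K, e k k = 1

/-- Nondegeneracy for a discrete group: the map `e♭ : K → Hom(K, U(1))`, `(e♭ l) k = e k l`,
is a group isomorphism. -/
def IsNondegenerate {K : Type*} [CommGroup K] (e : K → K → Circle) : Prop :=
  ∃ F : K ≃* (K →* Circle), ∀ k l : K, F l k = e k l

/-- An element of the circle killed by `orderOf ζ` is a power of `ζ`. -/
lemma exists_pow_of_pow_orderOf {ζ w : Circle} (hpos : 0 < orderOf ζ)
    (h : w ^ orderOf ζ = 1) : ∃ i : ℕ, ζ ^ i = w := by
  have hp : IsPrimitiveRoot (ζ : ℂ) (orderOf ζ) :=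
    (IsPrimitiveRoot.orderOf ζ).map_of_injective (f := Circle.coeHom) Circle.coe_injective
  have : NeZero (orderOf ζ) := ⟨hpos.ne'⟩
  obtain ⟨i, -, hi⟩ := hp.eq_pow_of_pow_eq_one (ξ := (w : ℂ)) (by exact_mod_cast congrArg _ h)
  exact ⟨i, Circle.coe_injective (by simpa using hi)⟩

section

universe u

variable {K : Type u} [CommGroup K]

lemma pairing_swap {E : K →* K →* Circle} (halt : ∀ k, E k k = 1) (k l : K) :
    E k l = (E l k)⁻¹ := by
  have h := halt (k * l)
  simp only [map_mul, MonoidHom.mul_apply, halt, one_mul, mul_one] at h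
  exact eq_inv_of_mul_eq_one_right h

lemma exists_orderOf_pairing [Finite K] {E : K →* K →* Circle}
    (hnd : ∀ k, (∀ l, E k l = 1) → k = 1) :
    ∃ x y : K, orderOf (E x y) = Monoid.exponent K := by
  obtain ⟨x, hx⟩ := Monoid.exists_orderOf_eq_exponent (Monoid.ExponentExists.of_finite (G := K))
  have : Finite (E x).range := Set.finite_range (E x)
  obtain ⟨⟨_, y, rfl⟩, hy⟩ :=
    Monoid.exists_orderOf_eq_exponent (Monoid.ExponentExists.of_finite (G := (E x).range))
  refine ⟨x, y, Nat.dvd_antisymm ?_ ?_⟩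
  · exact orderOf_dvd_of_pow_eq_one (by rw [← map_pow, Monoid.pow_exponent_eq_one, map_one])
  · rw [← hx]
    refine orderOf_dvd_of_pow_eq_one (hnd _ fun l => ?_)
    rw [(Subgroup.orderOf_mk (E x y) _).symm.trans hy, map_pow, MonoidHom.pow_apply]
    have := Monoid.pow_exponent_eq_one (⟨E x l, l, rfl⟩ : (E x).range)
    simpa using congrArg Subtype.val this

/-- Adjoining `x` to an isotropic subgroup orthogonal to `x` keeps it isotropic. -/
lemma isotropic_zpowers_sup {E : K →* K →* Circle} (halt : ∀ k, E k k = 1) (x : K)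
    (A : Subgroup K) (hA : ∀ a ∈ A, ∀ b ∈ A, E a b = 1) (hx : ∀ a ∈ A, E x a = 1) :
    ∀ a ∈ Subgroup.zpowers x ⊔ A, ∀ b ∈ Subgroup.zpowers x ⊔ A, E a b = 1 := by
  intro _ ha' _ hb'
  obtain ⟨_, ⟨i, rfl⟩, a, ha, rfl⟩ := Subgroup.mem_sup.1 ha'
  obtain ⟨_, ⟨j, rfl⟩, b, hb, rfl⟩ := Subgroup.mem_sup.1 hb'
  have h : E a x = 1 := by rw [pairing_swap halt, hx a ha, inv_one]
  simp [halt, hA a ha b hb, hx b hb, h]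

end

/-- A finite abelian group with a nondegenerate alternating pairing is generated by two isotropic
subgroups. -/
theorem exists_lagrangian_splitting.{u} (N : ℕ) : ∀ (K : Type u) [CommGroup K] [Finite K]
    (E : K →* K →* Circle), Nat.card K = N → (∀ k, E k k = 1) →
    (∀ k, (∀ l, E k l = 1) → k = 1) →
    ∃ A B : Subgroup K, (∀ a ∈ A, ∀ b ∈ A, E a b = 1) ∧ (∀ a ∈ B, ∀ b ∈ B, E a b = 1) ∧
      A ⊔ B = ⊤ := by
  induction N using Nat.strong_induction_on with
  | _ N ih =>
  intro K _ _ E hN halt hnd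
  rcases subsingleton_or_nontrivial K with hK | hK
  · exact ⟨⊥, ⊥, by simp, by simp, Subsingleton.elim _ _⟩
  obtain ⟨x, y, hxy⟩ := exists_orderOf_pairing hnd
  have hpos : 0 < orderOf (E x y) := by
    rw [hxy]; exact Nat.pos_of_ne_zero Monoid.exponent_ne_zero_of_finite
  have hswap := pairing_swap halt
  have hne : E x y ≠ 1 := by
    intro h
    rw [h, orderOf_one] at hxy
    exact not_subsingleton K (Monoid.exp_eq_one_iff.1 hxy.symm)
  -- The orthogonal complement of `{x, y}`.
  let L : Subgroup K := (E x).ker ⊓ (E y).ker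
  have hdec : ∀ k : K, ∃ i j : ℤ, ∃ l ∈ L, k = x ^ i * y ^ j * l := by
    intro k
    have hroot : ∀ z, E z k ^ orderOf (E x y) = 1 := fun z => by
      rw [hxy, ← map_pow, Monoid.pow_exponent_eq_one, map_one]
    obtain ⟨j, hj⟩ := exists_pow_of_pow_orderOf hpos (hroot x)
    obtain ⟨i, hi⟩ := exists_pow_of_pow_orderOf hpos (hroot y)
    -- `E y x = ζ⁻¹`, which is why the exponent of `x` changes sign.
    refine ⟨-i, j, (x ^ (-i : ℤ) * y ^ (j : ℤ))⁻¹ * k, ⟨?_, ?_⟩, by group⟩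
    · simp [halt, ← hj]
    · simp [halt, ← hi, hswap y x]
  have hlt : Nat.card L < N := by
    rw [← hN]
    refine lt_of_le_of_ne (Subgroup.card_le_card_group L) fun h => hne ?_
    have : y ∈ L := by rw [Subgroup.eq_top_of_card_eq L h]; trivial
    exact this.1
  have hLx : ∀ l ∈ L, E x l = 1 := fun l hl => hl.1
  have hLy : ∀ l ∈ L, E y l = 1 := fun l hl => hl.2
  let EL : L →* L →* Circle := (MonoidHom.compHom' L.subtype).comp (E.comp L.subtype)
  have hEL : ∀ a b : L, EL a b = E a b := fun _ _ => rfl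
  obtain ⟨A, B, hA, hB, hAB⟩ := ih _ hlt L EL rfl (fun k => halt k) (by
    intro l hl
    refine Subtype.ext (hnd _ fun k => ?_)
    obtain ⟨i, j, m, hm, rfl⟩ := hdec k
    have h1 : E l x = 1 := by rw [hswap, hLx l l.2, inv_one]
    have h2 : E l y = 1 := by rw [hswap, hLy l l.2, inv_one]
    have h3 : E l m = 1 := hl ⟨m, hm⟩
    simp [h1, h2, h3])
  refine ⟨Subgroup.zpowers x ⊔ A.map L.subtype, Subgroup.zpowers y ⊔ B.map L.subtype,
    isotropic_zpowers_sup halt x _ ?_ ?_, isotropic_zpowers_sup halt y _ ?_ ?_, ?_⟩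
  · rintro _ ⟨a, ha, rfl⟩ _ ⟨b, hb, rfl⟩; exact hA a ha b hb
  · rintro _ ⟨a, -, rfl⟩; exact hLx a a.2
  · rintro _ ⟨a, ha, rfl⟩ _ ⟨b, hb, rfl⟩; exact hB a ha b hb
  · rintro _ ⟨a, -, rfl⟩; exact hLy a a.2
  · have hL : L = A.map L.subtype ⊔ B.map L.subtype := by
      rw [← Subgroup.map_sup, hAB, ← MonoidHom.range_eq_map, Subgroup.range_subtype]
    rw [sup_sup_sup_comm, ← hL, eq_top_iff]
    intro k _
    obtain ⟨i, j, l, hl, rfl⟩ := hdec k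
    exact Subgroup.mul_mem_sup (Subgroup.mul_mem_sup ⟨i, rfl⟩ ⟨j, rfl⟩) hl

/-- The finite case of Theorem A: every nondegenerate alternating bicharacter on a finite
abelian group `K` is equivalent to the standard bicharacter on `A × Hom(A, U(1))` for some
finite abelian group `A`. -/
theorem finite_heisenberg_phase_space_splits
    {K : Type*} [CommGroup K] [Finite K]
    (e : K → K → Circle) (he : IsAltBicharacter e) (hnd : IsNondegenerate e) :
    ∃ (A : Type) (_iA : CommGroup A), Finite A ∧
      ∃ φ : A × (A →* Circle) ≃* K,
        ∀ (x x' : A) (χ χ' : A →* Circle),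
          e (φ (x, χ)) (φ (x', χ')) = χ' x * (χ x')⁻¹ := by
  obtain ⟨hr, hl, halt⟩ := he
  obtain ⟨F, hF⟩ := hnd
  let E : K →* K →* Circle :=
    MonoidHom.mk' (fun k => MonoidHom.mk' (e k) (hr k)) fun a b => MonoidHom.ext (hl a b)
  have hE : ∀ a b, E a b = e a b := fun _ _ => rfl
  have hswap : ∀ a b, E a b = (E b a)⁻¹ := pairing_swap halt
  have hndr : ∀ k, (∀ l, E l k = 1) → k = 1 := fun k h =>
    F.injective (by rw [map_one]; exact MonoidHom.ext fun l => by rw [hF, ← hE, h]; rfl)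
  obtain ⟨A, B, hA, hB, hAB⟩ := exists_lagrangian_splitting _ K E rfl halt
    fun k h => hndr k fun l => by rw [hswap, h, inv_one]
  have hdec : ∀ k : K, ∃ a ∈ A, ∃ b ∈ B, a * b = k := fun k =>
    Subgroup.mem_sup.1 (hAB ▸ Subgroup.mem_top k)
  have hB1 : ∀ b ∈ B, (∀ a ∈ A, E a b = 1) → b = 1 := by
    refine fun b hb h => hndr b fun k => ?_
    obtain ⟨a, ha, c, hc, rfl⟩ := hdec k
    simp [h a ha, hB c hc b hb]
  let s : A × B →* K := A.subtype.coprod B.subtype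
  have hs : ∀ a b, s (a, b) = a * b := fun _ _ => rfl
  have hsb : Function.Bijective s := by
    refine ⟨(injective_iff_map_eq_one s).2 ?_, fun k => ?_⟩
    · rintro ⟨a, b⟩ hab
      rw [hs] at hab
      -- `b = a⁻¹` lies in both subgroups.
      have hb : (b : K) = 1 := hB1 b b.2 fun c hc => by
        rw [eq_inv_of_mul_eq_one_right hab]
        simp [hA c hc a a.2]
      rw [hb, mul_one] at hab
      exact Prod.ext (Subtype.ext hab) (Subtype.ext hb)
    · obtain ⟨a, ha, b, hb, rfl⟩ := hdec k
      exact ⟨(⟨a, ha⟩, ⟨b, hb⟩), rfl⟩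
  let S : A × B ≃* K := MulEquiv.ofBijective s hsb
  let P : B →* (A →* Circle) := ((MonoidHom.compHom' A.subtype).comp E.flip).comp B.subtype
  have hP : ∀ (b : B) (a : A), P b a = E a b := fun _ _ => rfl
  have hPb : Function.Bijective P := by
    refine ⟨(injective_iff_map_eq_one P).2 fun b hb => ?_, fun χ => ?_⟩
    · exact Subtype.ext (hB1 b b.2 fun a ha => DFunLike.congr_fun hb (⟨a, ha⟩ : A))
    · obtain ⟨k, hk⟩ := F.surjective ((χ.comp (MonoidHom.fst A B)).comp S.symm.toMonoidHom)
      obtain ⟨a, ha, b, hb, rfl⟩ := hdec k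
      refine ⟨⟨b, hb⟩, MonoidHom.ext fun c => ?_⟩
      have h1 := DFunLike.congr_fun hk (c : K)
      have h2 : S.symm c = (c, 1) := by
        rw [MulEquiv.symm_apply_eq]; exact (mul_one (c : K)).symm
      rw [hF, ← hE, map_mul, hA c c.2 a ha, one_mul] at h1
      rw [hP]
      simpa [h2] using h1
  let Q : B ≃* (A →* Circle) := MulEquiv.ofBijective P hPb
  have hQ : ∀ (χ : A →* Circle) (a : A), E a (Q.symm χ) = χ a := fun χ a => by
    rw [← hP]; exact DFunLike.congr_fun (Q.apply_symm_apply χ) a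
  -- `Shrink` moves the finite group `A` to the lowest universe.
  let σ : Shrink.{0} A ≃* A := Shrink.mulEquiv
  refine ⟨Shrink.{0} A, inferInstance, Finite.of_equiv A σ.symm.toEquiv,
    (σ.prodCongr ((σ.monoidHomCongrLeft).trans Q.symm)).trans S, ?_⟩
  intro x x' χ χ'
  have hφ : ∀ (x : Shrink.{0} A) (χ : Shrink.{0} A →* Circle),
      ((σ.prodCongr ((σ.monoidHomCongrLeft).trans Q.symm)).trans S) (x, χ) =
        (σ x : K) * (Q.symm (χ.comp σ.symm.toMonoidHom) : K) := fun _ _ => rfl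
  rw [hφ, hφ, ← hE, map_mul E, MonoidHom.mul_apply, map_mul, map_mul,
    hA _ (σ x).2 _ (σ x').2, hB _ (Q.symm _).2 _ (Q.symm _).2, hswap (Q.symm _ : K), hQ, hQ]
  simp
end

section
/- Let K be a nontrivial finite abelian group of exponent d with a nondegenerate alternating bicharacter e : K × K → U(1). Then there exist elements x, y ∈ K, both of order d, such that e(x,y) is a primitive d-th root of unity, and K decomposes as an internal direct sum K = H ⊕ H⊥, where H is the subgroup generated by x and y and H⊥ = {k ∈ K : e(k,x) = 1 and e(k,y) = 1}; moreover the restriction of e to H⊥ × H⊥ is again a nondegenerate alternating bicharacter on H⊥. -/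
section Bicharacter

variable {K : Type*} [CommGroup K] {e : K → K → Circle}

/-- The bicharacter as a bundled homomorphism in its second variable: `flatHom he l k = e k l`. -/
noncomputable def IsAltBicharacter.flatHom (he : IsAltBicharacter e) : K →* K →* Circle :=
  MonoidHom.mk' (fun l => MonoidHom.mk' (fun k => e k l) fun k k' => he.2.1 k k' l)
    fun l l' => MonoidHom.ext fun k => he.1 k l l'

namespace IsAltBicharacter

lemma flatHom_apply (he : IsAltBicharacter e) (k l : K) : he.flatHom l k = e k l := rfl

lemma mul_right (he : IsAltBicharacter e) (k l l' : K) : e k (l * l') = e k l * e k l' :=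
  he.1 k l l'

lemma mul_left (he : IsAltBicharacter e) (k k' l : K) : e (k * k') l = e k l * e k' l :=
  he.2.1 k k' l

lemma one_left (he : IsAltBicharacter e) (l : K) : e 1 l = 1 := map_one (he.flatHom l)

lemma pow_right (he : IsAltBicharacter e) (k l : K) (n : ℕ) : e k (l ^ n) = e k l ^ n := by
  rw [← he.flatHom_apply, map_pow]; rfl

lemma zpow_left (he : IsAltBicharacter e) (k l : K) (n : ℤ) : e (k ^ n) l = e k l ^ n :=
  map_zpow (he.flatHom l) k n

lemma inv_left (he : IsAltBicharacter e) (k l : K) : e k⁻¹ l = (e k l)⁻¹ :=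
  map_inv (he.flatHom l) k

lemma swap (he : IsAltBicharacter e) (k l : K) : e l k = (e k l)⁻¹ := by
  have h := he.2.2 (k * l)
  rw [he.mul_left, he.mul_right, he.mul_right, he.2.2, he.2.2, one_mul, mul_one] at h
  exact eq_inv_of_mul_eq_one_right h

/-- The orthogonal complement of the pair `x, y`. -/
noncomputable def perp (he : IsAltBicharacter e) (x y : K) : Subgroup K :=
  (he.flatHom x).ker ⊓ (he.flatHom y).ker

lemma mem_perp (he : IsAltBicharacter e) {x y k : K} :
    k ∈ he.perp x y ↔ e k x = 1 ∧ e k y = 1 := Iff.rfl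

lemma restrict (he : IsAltBicharacter e) (P : Subgroup K) :
    IsAltBicharacter (fun a b : P => e (a : K) (b : K)) :=
  ⟨fun _ _ _ => he.1 _ _ _, fun _ _ _ => he.2.1 _ _ _, fun _ => he.2.2 _⟩

end IsAltBicharacter

lemma IsNondegenerate.eq_one (hnd : IsNondegenerate e) {l : K} (h : ∀ k, e k l = 1) : l = 1 := by
  obtain ⟨F, hF⟩ := hnd
  refine (map_eq_one_iff F F.injective).1 (MonoidHom.ext fun k => ?_)
  rw [hF, h, MonoidHom.one_apply]

lemma exists_zpow_eq_of_isPrimitiveRoot {d : ℕ} (hd : d ≠ 0) {z w : Circle}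
    (hz : IsPrimitiveRoot z d) (hw : w ^ d = 1) : ∃ n : ℤ, z ^ n = w := by
  have : NeZero d := ⟨hd⟩
  have hz' : IsPrimitiveRoot (z : ℂ) d :=
    hz.map_of_injective (f := Circle.coeHom) Circle.coe_injective
  obtain ⟨i, -, hi⟩ := hz'.eq_pow_of_pow_eq_one (ξ := (w : ℂ))
    (by rw [← Circle.coe_pow, hw, Circle.coe_one])
  exact ⟨i, Circle.coe_injective (by simpa using hi)⟩

/-- An element of order the exponent has a partner of the same order, with pairing of that order. -/
lemma exists_partner [Finite K] (he : IsAltBicharacter e) (hnd : IsNondegenerate e) {x : K}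
    (hx : orderOf x = Monoid.exponent K) :
    ∃ y : K, orderOf y = Monoid.exponent K ∧ orderOf (e y x) = Monoid.exponent K := by
  have hfin : Finite (he.flatHom x).range :=
    Finite.of_surjective _ (he.flatHom x).rangeRestrict_surjective
  obtain ⟨w, hw⟩ := Monoid.exists_orderOf_eq_exponent
    (Monoid.ExponentExists.of_finite (G := (he.flatHom x).range))
  obtain ⟨y, rfl⟩ := (he.flatHom x).rangeRestrict_surjective w
  have hy : orderOf (e y x) = Monoid.exponent (he.flatHom x).range :=
    (Subgroup.orderOf_coe _).trans hw
  have h1 : orderOf (e y x) ∣ orderOf y := orderOf_map_dvd (he.flatHom x) y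
  have h2 : orderOf y ∣ Monoid.exponent K := Monoid.order_dvd_exponent y
  have h3 : Monoid.exponent K ∣ orderOf (e y x) := by
    rw [← hx]
    refine orderOf_dvd_of_pow_eq_one (hnd.eq_one fun k => ?_)
    rw [he.pow_right, hy]
    exact congrArg Subtype.val
      (Monoid.pow_exponent_eq_one (⟨he.flatHom x k, k, rfl⟩ : (he.flatHom x).range))
  exact ⟨y, Nat.dvd_antisymm h2 (h3.trans h1), Nat.dvd_antisymm (h1.trans h2) h3⟩

/-- Every element differs from an orthogonal one by a product of powers of `x` and `y`. -/
lemma exists_zpow_mul_zpow_orthogonal {d : ℕ} (hd : d ≠ 0) (hK : ∀ k : K, k ^ d = 1)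
    (he : IsAltBicharacter e) {x y : K} (hxy : IsPrimitiveRoot (e x y) d) (k : K) :
    ∃ m n : ℤ, k * (x ^ m * y ^ n)⁻¹ ∈ he.perp x y := by
  have hyx : IsPrimitiveRoot (e y x) d := by rw [he.swap x y]; exact hxy.inv
  have hpow (l : K) : e k l ^ d = 1 := by
    rw [← he.pow_right, hK, he.swap 1 k, he.one_left, inv_one]
  obtain ⟨m, hm⟩ := exists_zpow_eq_of_isPrimitiveRoot hd hxy (hpow y)
  obtain ⟨n, hn⟩ := exists_zpow_eq_of_isPrimitiveRoot hd hyx (hpow x)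
  refine ⟨m, n, he.mem_perp.2 ⟨?_, ?_⟩⟩
  · simp only [he.mul_left, he.inv_left, he.zpow_left, he.2.2, hn, one_zpow, one_mul, mul_inv_cancel]
  · simp only [he.mul_left, he.inv_left, he.zpow_left, he.2.2, hm, one_zpow, mul_one, mul_inv_cancel]

lemma isCompl_closure_perp {d : ℕ} (hd : d ≠ 0) (hK : ∀ k : K, k ^ d = 1)
    (he : IsAltBicharacter e) {x y : K} (hxy : IsPrimitiveRoot (e x y) d) :
    IsCompl (Subgroup.closure {x, y}) (he.perp x y) := by
  have hyx : IsPrimitiveRoot (e y x) d := by rw [he.swap x y]; exact hxy.inv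
  have hz (k : K) (n : ℤ) (h : (d : ℤ) ∣ n) : k ^ n = 1 := by
    obtain ⟨c, rfl⟩ := h
    rw [zpow_mul, zpow_natCast, hK, one_zpow]
  constructor
  · rw [Subgroup.disjoint_def]
    intro k hk hp
    obtain ⟨m, n, rfl⟩ := Subgroup.mem_closure_pair.1 hk
    obtain ⟨h1, h2⟩ := he.mem_perp.1 hp
    rw [he.mul_left, he.zpow_left, he.zpow_left, he.2.2, one_zpow] at h1 h2
    rw [one_mul] at h1
    rw [mul_one] at h2
    rw [hz x m ((hxy.zpow_eq_one_iff_dvd m).1 h2), hz y n ((hyx.zpow_eq_one_iff_dvd n).1 h1),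
      mul_one]
  · rw [codisjoint_iff, eq_top_iff]
    intro k _
    obtain ⟨m, n, h⟩ := exists_zpow_mul_zpow_orthogonal hd hK he hxy k
    exact Subgroup.mem_sup.2 ⟨_, Subgroup.mem_closure_pair.2 ⟨m, n, rfl⟩, _, h,
      by rw [mul_comm, inv_mul_cancel_right]⟩

/-- An orthogonal direct summand of a nondegenerate bicharacter is nondegenerate. -/
lemma isNondegenerate_of_isCompl (he : IsAltBicharacter e) (hnd : IsNondegenerate e)
    {H P : Subgroup K} (hc : IsCompl H P) (horth : ∀ h ∈ H, ∀ p ∈ P, e p h = 1) :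
    IsNondegenerate (fun a b : P => e (a : K) (b : K)) := by
  have hdec (k : K) : ∃ p : P, k * (p : K)⁻¹ ∈ H := by
    have hk : k ∈ H ⊔ P := by rw [hc.sup_eq_top]; trivial
    obtain ⟨h, hh, p, hp, rfl⟩ := Subgroup.mem_sup.1 hk
    exact ⟨⟨p, hp⟩, by simpa using hh⟩
  have huniq (k : K) (p q : P) (hp : k * (p : K)⁻¹ ∈ H) (hq : k * (q : K)⁻¹ ∈ H) : p = q := by
    have hH : (q : K) * (p : K)⁻¹ ∈ H := by
      have := H.mul_mem (H.inv_mem hq) hp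
      rwa [show (k * (q : K)⁻¹)⁻¹ * (k * (p : K)⁻¹) = q * (p : K)⁻¹ by group] at this
    have h1 := Subgroup.disjoint_def.1 hc.disjoint hH (P.mul_mem q.2 (P.inv_mem p.2))
    exact Subtype.ext (mul_inv_eq_one.1 h1).symm
  choose π hπ using hdec
  have hπmul (k l : K) : π (k * l) = π k * π l := by
    refine huniq (k * l) _ _ (hπ _) ?_
    have := H.mul_mem (hπ k) (hπ l)
    rwa [mul_mul_mul_comm, ← mul_inv] at this
  have hπP (p : P) : π p = p := huniq p _ _ (hπ _) (by rw [mul_inv_cancel]; exact H.one_mem)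
  have hright (p : P) (l : K) : e p l = e p (π l) := by
    have h := horth _ (hπ l) p p.2
    calc e p l = e p (l * (π l : K)⁻¹ * π l) := by rw [inv_mul_cancel_right]
      _ = e p (π l) := by rw [he.mul_right, h, one_mul]
  have hinj : Function.Injective (he.restrict P).flatHom := by
    refine (injective_iff_map_eq_one _).2 fun b hb => Subtype.ext (hnd.eq_one fun k => ?_)
    have h : e (π k) b = 1 := DFunLike.congr_fun hb (π k)
    rw [he.swap (b : K) k, hright, he.swap (π k : K) b, inv_inv, h]
  have hsurj : Function.Surjective (he.restrict P).flatHom := by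
    intro χ
    obtain ⟨F, hF⟩ := hnd
    obtain ⟨l, hl⟩ := F.surjective (χ.comp (MonoidHom.mk' π hπmul))
    refine ⟨π l, MonoidHom.ext fun a => ?_⟩
    change e a (π l) = χ a
    rw [← hright, ← hF, hl]
    exact congrArg χ (hπP a)
  exact ⟨MulEquiv.ofBijective _ ⟨hinj, hsurj⟩, fun _ _ => rfl⟩

end Bicharacter

/-- Splitting off a "hyperbolic plane": in a nontrivial finite abelian group `K` of exponent
`d` with nondegenerate alternating bicharacter `e`, there are elements `x, y` of order `d`
with `e x y` a primitive `d`-th root of unity, and `K` is the internal direct sum of the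
subgroup `H` generated by `x` and `y` and its orthogonal complement `H⊥`, on which `e`
restricts to a nondegenerate alternating bicharacter. -/
theorem finite_heisenberg_split_hyperbolic_plane
    {K : Type*} [CommGroup K] [Finite K] [Nontrivial K]
    (e : K → K → Circle) (he : IsAltBicharacter e) (hnd : IsNondegenerate e)
    (d : ℕ) (hd : Monoid.exponent K = d) :
    ∃ x y : K, orderOf x = d ∧ orderOf y = d ∧ IsPrimitiveRoot (e x y) d ∧
      ∃ Hperp : Subgroup K,
        (Hperp : Set K) = {k : K | e k x = 1 ∧ e k y = 1} ∧
        IsCompl (Subgroup.closure {x, y} : Subgroup K) Hperp ∧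
        IsAltBicharacter (fun a b : Hperp => e (a : K) (b : K)) ∧
        IsNondegenerate (fun a b : Hperp => e (a : K) (b : K)) := by
  subst hd
  have hd0 : Monoid.exponent K ≠ 0 := Monoid.exponent_ne_zero_of_finite
  obtain ⟨x, hx⟩ := Monoid.exists_orderOf_eq_exponent (Monoid.ExponentExists.of_finite (G := K))
  obtain ⟨y, hy, hyx⟩ := exists_partner he hnd hx
  have hxy : IsPrimitiveRoot (e x y) (Monoid.exponent K) := by
    rw [he.swap y x, ← hyx]
    exact (IsPrimitiveRoot.orderOf _).inv
  have hc := isCompl_closure_perp hd0 Monoid.pow_exponent_eq_one he hxy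
  refine ⟨x, y, hx, hy, hxy, he.perp x y, rfl, hc, he.restrict _,
    isNondegenerate_of_isCompl he hnd hc fun h hh p hp => ?_⟩
  obtain ⟨m, n, rfl⟩ := Subgroup.mem_closure_pair.1 hh
  obtain ⟨h1, h2⟩ := he.mem_perp.1 hp
  rw [he.swap (x ^ m * y ^ n) p, he.mul_left, he.zpow_left, he.zpow_left, he.swap p x, he.swap p y,
    h1, h2]
  simp
end

section
/- Let e : ℝⁿ × ℝⁿ → U(1) be a nondegenerate alternating bicharacter on the additive topological group ℝⁿ. Then n is even, and there exists a nondegenerate alternating (symplectic) ℝ-bilinear form Q : ℝⁿ × ℝⁿ → ℝ such that e(k,l) = exp(i·Q(k,l)) for all k, l ∈ ℝⁿ. -/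
/-!
Since `ℝⁿ × ℝⁿ` is contractible, `e` lifts through the covering `Circle.exp : ℝ → U(1)` to a
continuous function `q` with `q (0, 0) = 0`. Each identity satisfied by `e` says that some
continuous combination of values of `q` lies in the kernel `2πℤ` of `Circle.exp`; such a combination
vanishes at the origin, hence everywhere, by uniqueness of lifts on a connected space
(`eq_zero_of_exp_eq_one`). So `q` is biadditive and alternating, and continuity upgrades
biadditivity to `ℝ`-bilinearity. A vector in the radical of `q` is killed by `e♭`, so it is zero
by injectivity of `e♭`. Finally the Gram matrix `A` of `q` satisfies `Aᵀ = -A` and `det A ≠ 0`,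
so `det A = (-1) ^ n * det A` forces `n` to be even.
-/

/-- An alternating bicharacter on an additively written topological abelian group `K`:
a continuous map `K × K → U(1)` which is a homomorphism in each variable separately and
satisfies `e k k = 1`. -/
def IsAltBicharacterAdd {K : Type*} [AddCommGroup K] [TopologicalSpace K]
    (e : K → K → Circle) : Prop :=
  (Continuous fun p : K × K => e p.1 p.2) ∧
  (∀ k l l' : K, e k (l + l') = e k l * e k l') ∧
  (∀ k k' l : K, e (k + k') l = e k l * e k' l) ∧
  ∀ k : K, e k k = 1

/-- Nondegeneracy: the map `e♭ : K → K̂`, `(e♭ l) k = e k l`, is an isomorphism of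
topological groups onto the Pontryagin dual. -/
def IsNondegenerateAdd {K : Type*} [AddCommGroup K] [TopologicalSpace K]
    (e : K → K → Circle) : Prop :=
  ∃ F : Multiplicative K ≃* PontryaginDual (Multiplicative K),
    Continuous F ∧ Continuous F.symm ∧
    ∀ k l : K, F (Multiplicative.ofAdd l) (Multiplicative.ofAdd k) = e k l

/-- A continuous real function on a connected space with values in `2πℤ` which vanishes somewhere
vanishes identically. -/
lemma eq_zero_of_exp_eq_one {X : Type*} [TopologicalSpace X] [PreconnectedSpace X] {g : X → ℝ}
    (hg : Continuous g) (h : ∀ x, Circle.exp (g x) = 1) (a : X) (ha : g a = 0) (x : X) :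
    g x = 0 :=
  congr_fun (Circle.isCoveringMap_exp.eq_of_comp_eq hg continuous_const
    (funext fun y => by simp [h y]) a ha : g = fun _ => (0 : ℝ)) x

/-- The Gram matrix of a nondegenerate alternating form on `ℝⁿ` is invertible and skew-symmetric,
which is impossible for odd `n`. -/
lemma even_of_alternating_nondegenerate {n : ℕ} (Q : (Fin n → ℝ) →ₗ[ℝ] (Fin n → ℝ) →ₗ[ℝ] ℝ)
    (halt : ∀ k, Q k k = 0) (hnd : ∀ k, (∀ l, Q k l = 0) → k = 0) : Even n := by
  by_contra hn
  have hodd : Odd n := Nat.not_even_iff_odd.mp hn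
  have hQ : Q.IsAlt := halt
  let A : Matrix (Fin n) (Fin n) ℝ := LinearMap.toMatrix₂' ℝ Q
  have hskew : A.transpose = -A := by
    ext i j
    simp [A, LinearMap.toMatrix₂'_apply, ← hQ.neg (Pi.single i 1) (Pi.single j 1)]
  have hdet : A.det = 0 := by
    have h := congrArg Matrix.det hskew
    rw [Matrix.det_transpose, Matrix.det_neg, Fintype.card_fin, hodd.neg_one_pow] at h
    linarith
  obtain ⟨v, hv, hvA⟩ := Matrix.exists_vecMul_eq_zero_iff.mpr hdet
  refine hv (hnd v fun l => ?_)
  have h : Matrix.toLinearMap₂' ℝ A v l = Q v l := by simp [A]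
  rw [← h, Matrix.toLinearMap₂'_apply', Matrix.dotProduct_mulVec, hvA, zero_dotProduct]

/-- A nondegenerate alternating bicharacter on `ℝⁿ` forces `n` even and is of the form
`e (k, l) = exp (i Q (k, l))` for a nondegenerate alternating (symplectic) real bilinear
form `Q`. -/
theorem real_bicharacter_symplectic
    (n : ℕ) (e : (Fin n → ℝ) → (Fin n → ℝ) → Circle)
    (he : IsAltBicharacterAdd e) (hnd : IsNondegenerateAdd e) :
    Even n ∧
    ∃ Q : (Fin n → ℝ) →ₗ[ℝ] (Fin n → ℝ) →ₗ[ℝ] ℝ,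
      (∀ k, Q k k = 0) ∧
      (∀ k, (∀ l, Q k l = 0) → k = 0) ∧
      ∀ k l, e k l = Circle.exp (Q k l) := by
  obtain ⟨hcont, hright, hleft, halt⟩ := he
  obtain ⟨F, -, -, hF⟩ := hnd
  obtain ⟨q, ⟨hq0, hq⟩, -⟩ := Circle.isCoveringMap_exp.existsUnique_continuousMap_lifts
    (⟨_, hcont⟩ : C((Fin n → ℝ) × (Fin n → ℝ), Circle)) (0, 0) 0 (by simp [halt])
  have hqe (k l : Fin n → ℝ) : Circle.exp (q (k, l)) = e k l := congr_fun hq (k, l)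
  have hadd_right (k l l' : Fin n → ℝ) : q (k, l + l') = q (k, l) + q (k, l') :=
    sub_eq_zero.mp <| eq_zero_of_exp_eq_one
      (X := (Fin n → ℝ) × (Fin n → ℝ) × (Fin n → ℝ))
      (g := fun p => q (p.1, p.2.1 + p.2.2) - (q (p.1, p.2.1) + q (p.1, p.2.2)))
      (by fun_prop) (fun p => by simp [Circle.exp_add, hqe, hright]) (0, 0, 0)
      (by simp [hq0]) (k, l, l')
  have hadd_left (k k' l : Fin n → ℝ) : q (k + k', l) = q (k, l) + q (k', l) :=
    sub_eq_zero.mp <| eq_zero_of_exp_eq_one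
      (X := (Fin n → ℝ) × (Fin n → ℝ) × (Fin n → ℝ))
      (g := fun p => q (p.1 + p.2.1, p.2.2) - (q (p.1, p.2.2) + q (p.2.1, p.2.2)))
      (by fun_prop) (fun p => by simp [Circle.exp_add, hqe, hleft]) (0, 0, 0)
      (by simp [hq0]) (k, k', l)
  have hself (k : Fin n → ℝ) : q (k, k) = 0 :=
    eq_zero_of_exp_eq_one (g := fun k => q (k, k)) (by fun_prop)
      (fun k => by simp [hqe, halt]) 0 hq0 k
  let Q : (Fin n → ℝ) →ₗ[ℝ] (Fin n → ℝ) →ₗ[ℝ] ℝ := LinearMap.mk₂ ℝ (fun k l => q (k, l))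
    hadd_left
    (fun c k l => map_real_smul (AddMonoidHom.mk' (fun k => q (k, l)) (hadd_left · · l))
      (by change Continuous fun k => q (k, l); fun_prop) c k)
    hadd_right
    (fun c k l => map_real_smul (AddMonoidHom.mk' (fun l => q (k, l)) (hadd_right k))
      (by change Continuous fun l => q (k, l); fun_prop) c l)
  have hQ : Q.IsAlt := hself
  have hQnd (k : Fin n → ℝ) (hk : ∀ l, Q k l = 0) : k = 0 := by
    have hF1 : F (Multiplicative.ofAdd k) = 1 := by
      refine DFunLike.ext _ _ fun l => ?_
      have h : q (l.toAdd, k) = 0 := hQ.eq_iff.mp (hk l.toAdd)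
      exact (hF l.toAdd k).trans (by rw [← hqe, h, Circle.exp_zero]; rfl)
    exact ofAdd_eq_one.mp ((map_eq_one_iff F F.injective).mp hF1)
  exact ⟨even_of_alternating_nondegenerate Q hself hQnd, Q, hself, hQnd, fun k l => (hqe k l).symm⟩
end

section
/- Let K be an abelian group and let c : K × K → U(1) be a 2-cocycle, i.e., c(k,l)·c(k+l,m) = c(k,l+m)·c(l,m) for all k, l, m ∈ K. If c is symmetric, i.e., c(k,l) = c(l,k) for all k, l ∈ K, then c is a coboundary: there exists a function f : K → U(1) such that c(k,l) = f(k+l)·f(k)⁻¹·f(l)⁻¹ for all k, l ∈ K. -/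
/-!
A symmetric 2-cocycle `c` on `K` with values in an abelian group `A` defines an *abelian* extension
`0 → A → E → K → 0`, where `E = A × K` has the twisted addition
`(a, k) + (b, l) = (a + b + c k l, k + l)`. If `A` is divisible it is an injective `ℤ`-module, so
the identity of `A` extends along `A → E` to a retraction `r : E → A`. Applying `r` to
`(0, k) + (0, l) = ι (c k l) + (0, k + l)` exhibits `c` as the coboundary of `k ↦ -r (0, k)`.
The theorem is the case `A = Additive Circle`, divisible because the circle has `n`-th roots.
-/

/-- The underlying set `A × K` of the extension of `K` by `A` defined by the cocycle `c`. It is a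
structure depending on `c` so that it can carry the twisted addition instead of the product one. -/
@[ext]
structure TwistedExt {A K : Type*} (c : K → K → A) where
  /-- The fibre coordinate. -/
  fst : A
  /-- The image in the quotient `K`. -/
  snd : K

section

variable {A K : Type*} [AddCommGroup A] [AddCommGroup K] (c : K → K → A)

theorem cocycle_zero_left
    (hc : ∀ k l m : K, c k l + c (k + l) m = c k (l + m) + c l m) (m : K) :
    c 0 m = c 0 0 := by
  have h := hc 0 0 m
  simp only [zero_add] at h
  exact (add_right_cancel h).symm

/-- The abelian group structure on the extension. The cocycle is not assumed normalized, which
is why `c 0 0` enters the zero and the negation. -/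
abbrev TwistedExt.addCommGroup
    (hc : ∀ k l m : K, c k l + c (k + l) m = c k (l + m) + c l m)
    (hs : ∀ k l : K, c k l = c l k) : AddCommGroup (TwistedExt c) :=
  letI : Add (TwistedExt c) := ⟨fun x y => ⟨x.fst + y.fst + c x.snd y.snd, x.snd + y.snd⟩⟩
  letI : Zero (TwistedExt c) := ⟨⟨-c 0 0, 0⟩⟩
  letI : Neg (TwistedExt c) := ⟨fun x => ⟨-x.fst - c (-x.snd) x.snd - c 0 0, -x.snd⟩⟩
  have add_def : ∀ x y : TwistedExt c,
    x + y = ⟨x.fst + y.fst + c x.snd y.snd, x.snd + y.snd⟩ := fun _ _ => rfl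
  have zero_def : (0 : TwistedExt c) = ⟨-c 0 0, 0⟩ := rfl
  have neg_def : ∀ x : TwistedExt c,
    -x = ⟨-x.fst - c (-x.snd) x.snd - c 0 0, -x.snd⟩ := fun _ => rfl
  have hcomm : ∀ x y : TwistedExt c, x + y = y + x := fun x y => by
    rw [add_def, add_def, hs x.snd, add_comm x.fst, add_comm x.snd]
  have hzero : ∀ x : TwistedExt c, 0 + x = x := fun x => by
    ext
    · simp [add_def, zero_def, cocycle_zero_left c hc x.snd]
    · simp [add_def, zero_def]
  { add_assoc := fun x y z => by
      ext
      · have h := hc x.snd y.snd z.snd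
        simp only [add_def]
        calc x.fst + y.fst + c x.snd y.snd + z.fst + c (x.snd + y.snd) z.snd
            = x.fst + y.fst + z.fst + (c x.snd y.snd + c (x.snd + y.snd) z.snd) := by abel
          _ = x.fst + (y.fst + z.fst + c y.snd z.snd) + c x.snd (y.snd + z.snd) := by
              rw [h]
              abel
      · exact add_assoc _ _ _
    zero_add := hzero
    add_zero := fun x => by rw [hcomm, hzero]
    neg_add_cancel := fun x => by
      ext
      · simp only [add_def, zero_def, neg_def]
        abel
      · simp [add_def, zero_def, neg_def]
    add_comm := hcomm
    nsmul := nsmulRec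
    zsmul := zsmulRec }

theorem exists_coboundary_of_divisible [DivisibleBy A ℤ]
    (hc : ∀ k l m : K, c k l + c (k + l) m = c k (l + m) + c l m)
    (hs : ∀ k l : K, c k l = c l k) :
    ∃ f : K → A, ∀ k l : K, c k l = f (k + l) - f k - f l := by
  let := TwistedExt.addCommGroup c hc hs
  have add_def : ∀ x y : TwistedExt c,
    x + y = ⟨x.fst + y.fst + c x.snd y.snd, x.snd + y.snd⟩ := fun _ _ => rfl
  let ι : A →+ TwistedExt c := AddMonoidHom.mk' (fun a => ⟨a - c 0 0, 0⟩) fun a b => by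
    ext
    · simp only [add_def]
      abel
    · simp [add_def]
  have hι : Function.Injective ι := fun a b h =>
    sub_left_injective (congrArg TwistedExt.fst h)
  obtain ⟨r, hr⟩ := (Module.Baer.of_divisible A).extension_property_addMonoidHom ι hι
    (AddMonoidHom.id A)
  refine ⟨fun k => -r ⟨0, k⟩, fun k l => ?_⟩
  have key : (⟨0, k⟩ + ⟨0, l⟩ : TwistedExt c) = ι (c k l) + ⟨0, k + l⟩ := by
    ext
    · simp [add_def, ι, cocycle_zero_left c hc (k + l)]
    · simp [add_def, ι]
  have h := congrArg r key
  have hrc : r (ι (c k l)) = c k l := DFunLike.congr_fun hr (c k l)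
  rw [map_add, map_add, hrc] at h
  rw [eq_sub_of_add_eq h.symm]
  simp only [sub_neg_eq_add]
  abel

end

theorem circle_exists_zpow_eq (n : ℤ) (hn : n ≠ 0) (z : Circle) : ∃ w : Circle, w ^ n = z := by
  refine ⟨Circle.exp (Complex.arg z / n), ?_⟩
  rw [← Circle.exp_zsmul, zsmul_eq_mul, mul_div_cancel₀ _ (Int.cast_ne_zero.mpr hn),
    Circle.exp_arg]

/-- A symmetric `U(1)`-valued 2-cocycle on an abelian group is a coboundary. -/
theorem symmetric_cocycle_is_coboundary
    {K : Type*} [AddCommGroup K] (c : K → K → Circle)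
    (hcocycle : ∀ k l m : K, c k l * c (k + l) m = c k (l + m) * c l m)
    (hsymm : ∀ k l : K, c k l = c l k) :
    ∃ f : K → Circle, ∀ k l : K, c k l = f (k + l) * (f k)⁻¹ * (f l)⁻¹ := by
  let : DivisibleBy (Additive Circle) ℤ :=
    divisibleByOfSMulRightSurj (Additive Circle) ℤ fun {n} hn z =>
      circle_exists_zpow_eq n hn z.toMul
  obtain ⟨f, hf⟩ := exists_coboundary_of_divisible (fun k l => Additive.ofMul (c k l))
    hcocycle hsymm
  refine ⟨fun k => (f k).toMul, fun k l => ?_⟩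
  have h := congrArg Additive.toMul (hf k l)
  simpa [div_eq_mul_inv] using h
end
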